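/- arXiv:2007.06138 — 2 statements merged into one kernel-verified Lean document; each statement's English description precedes it below -/
import Mathlib

section
/- Let ρ be a positive definite d×d complex matrix and let E(ρ) denote its diagonal pinching, i.e. (E(ρ))_{ii} = ρ_{ii} and (E(ρ))_{ij} = 0 for i ≠ j. Then Tr((ρ − E(ρ))·log ρ) = D(ρ‖E(ρ)) + D(E(ρ)‖ρ), where D(a‖b) := Tr(a·log a − a·log b) and log is matrix logarithm by functional calculus; consequently Tr((ρ − E(ρ))·log ρ) ≥ D(ρ‖E(ρ)). -/
open scoped ComplexOrder

/-!
The identity is bookkeeping once `log E(ρ)` is known to be diagonal: then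
`Tr(ρ log E(ρ)) = Tr(E(ρ) log E(ρ))`, and the two terms in `log E(ρ)` cancel.

The inequality amounts to `D(E(ρ)‖ρ) ≥ 0`. Because `E(ρ)` is diagonal,
`D(E(ρ)‖ρ) = ∑ i, ρ i i * (log (ρ i i) - (log ρ) i i)`, and each summand is already nonnegative.
Indeed, with `ρ = U Λ U*`, one has `(f ρ) i i = ∑ j, ‖U i j‖ ^ 2 * f (λ j)`, where the weights
`‖U i j‖ ^ 2` sum to one over `j`; so `(log ρ) i i ≤ log (ρ i i)` is Jensen's inequality for the
concave function `log`.
-/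

/-- The functional calculus of a real diagonal matrix acts on the diagonal entries. -/
lemma cfc_diagonal_ofReal {d : ℕ} (r : Fin d → ℝ) (f : ℝ → ℝ) :
    cfc f (Matrix.diagonal fun i => (r i : ℂ)) = Matrix.diagonal fun i => (f (r i) : ℂ) := by
  have hD : (Matrix.diagonal fun i => (r i : ℂ)).IsHermitian := by
    rw [Matrix.isHermitian_diagonal_iff]
    intro i
    simp [isSelfAdjoint_iff]
  rw [hD.cfc_eq f, Matrix.IsHermitian.cfc, Unitary.conjStarAlgAut_apply]
  have hU : (hD.eigenvectorUnitary : Matrix (Fin d) (Fin d) ℂ) *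
      star (hD.eigenvectorUnitary : Matrix (Fin d) (Fin d) ℂ) = 1 :=
    Unitary.mul_star_self_of_mem hD.eigenvectorUnitary.2
  have hU' : star (hD.eigenvectorUnitary : Matrix (Fin d) (Fin d) ℂ) *
      (hD.eigenvectorUnitary : Matrix (Fin d) (Fin d) ℂ) = 1 :=
    Unitary.star_mul_self_of_mem hD.eigenvectorUnitary.2
  have hspec := hD.spectral_theorem
  rw [Unitary.conjStarAlgAut_apply] at hspec
  have hcomm := congrArg (· * (hD.eigenvectorUnitary : Matrix (Fin d) (Fin d) ℂ)) hspec
  simp only [Matrix.mul_assoc, hU', Matrix.mul_one] at hcomm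
  -- Entrywise, `D U = U Λ` says `r i = λ j` wherever `U i j ≠ 0`, so `f (D) U = U f (Λ)`.
  have key : (hD.eigenvectorUnitary : Matrix (Fin d) (Fin d) ℂ) *
      Matrix.diagonal (RCLike.ofReal ∘ f ∘ hD.eigenvalues) =
      (Matrix.diagonal fun i => (f (r i) : ℂ)) *
        (hD.eigenvectorUnitary : Matrix (Fin d) (Fin d) ℂ) := by
    ext i j
    have hij := congrFun (congrFun hcomm i) j
    rw [Matrix.diagonal_mul, Matrix.mul_diagonal] at hij
    rw [Matrix.diagonal_mul, Matrix.mul_diagonal]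
    by_cases h0 : (hD.eigenvectorUnitary : Matrix (Fin d) (Fin d) ℂ) i j = 0
    · rw [h0, zero_mul, mul_zero]
    · have hr : r i = hD.eigenvalues j := by
        rw [mul_comm] at hij
        exact Complex.ofReal_injective (mul_left_cancel₀ h0 hij)
      simp [hr, mul_comm]
  rw [key, Matrix.mul_assoc, hU, Matrix.mul_one]

/-- Diagonal entries of `f A` are averages of `f` over the eigenvalues of `A`, with weights the
squared moduli of a row of the eigenvector matrix. -/
lemma cfc_apply_diag {d : ℕ} {A : Matrix (Fin d) (Fin d) ℂ} (hA : A.IsHermitian) (f : ℝ → ℝ)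
    (i : Fin d) :
    cfc f A i i = ((∑ j, ‖(hA.eigenvectorUnitary : Matrix (Fin d) (Fin d) ℂ) i j‖ ^ 2 *
      f (hA.eigenvalues j) : ℝ) : ℂ) := by
  rw [hA.cfc_eq f, Matrix.IsHermitian.cfc, Unitary.conjStarAlgAut_apply, Matrix.mul_apply]
  push_cast
  refine Finset.sum_congr rfl fun j _ => ?_
  rw [Matrix.mul_diagonal, Matrix.star_apply, mul_right_comm, Complex.star_def, Complex.mul_conj']
  rfl

/-- Jensen's inequality for the diagonal entries of the logarithm of a positive definite matrix. -/
lemma exists_log_diag_le {d : ℕ} {ρ : Matrix (Fin d) (Fin d) ℂ} (hρ : ρ.PosDef) (i : Fin d) :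
    ∃ p l : ℝ, 0 < p ∧ ρ i i = p ∧ cfc Real.log ρ i i = l ∧ l ≤ Real.log p := by
  have hH := hρ.isHermitian
  have hsa : IsSelfAdjoint ρ := hH
  have h1 := cfc_apply_diag hH (fun _ => 1) i
  have hid := cfc_apply_diag hH id i
  rw [cfc_const_one ℝ ρ, Matrix.one_apply_eq] at h1
  rw [cfc_id ℝ ρ] at hid
  have hw : ∑ j, ‖(hH.eigenvectorUnitary : Matrix (Fin d) (Fin d) ℂ) i j‖ ^ 2 = 1 := by
    simp only [mul_one] at h1
    exact_mod_cast h1.symm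
  refine ⟨_, _, ?_, hid, cfc_apply_diag hH Real.log i, ?_⟩
  · have := hρ.diag_pos (i := i)
    rw [hid] at this
    exact_mod_cast this
  · simpa using strictConcaveOn_log_Ioi.concaveOn.le_map_sum (t := Finset.univ)
      (w := fun j => ‖(hH.eigenvectorUnitary : Matrix (Fin d) (Fin d) ℂ) i j‖ ^ 2)
      (p := hH.eigenvalues) (fun _ _ => by positivity) hw
      (fun j _ => hρ.eigenvalues_pos j)

/-- Equation (11) of the paper for the diagonal pinching `E` on `M_d(ℂ)`: for a positive
definite density `ρ`, the Fisher information of the generator `I - E` equals the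
symmetrized relative entropy,
`Tr((ρ - E(ρ))·log ρ) = D(ρ‖E(ρ)) + D(E(ρ)‖ρ)` where
`D(a‖b) = Tr(a·log a - a·log b)`; consequently
`Tr((ρ - E(ρ))·log ρ) ≥ D(ρ‖E(ρ))`. -/
theorem pinching_fisher_info_eq_symmetrized_relative_entropy
    (d : ℕ) (ρ : Matrix (Fin d) (Fin d) ℂ) (hρ : ρ.PosDef) :
    ((ρ - Matrix.diagonal fun i => ρ i i) * cfc Real.log ρ).trace =
        ((ρ * cfc Real.log ρ
            - ρ * cfc Real.log (Matrix.diagonal fun i => ρ i i)).trace)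
        + (((Matrix.diagonal fun i => ρ i i)
              * cfc Real.log (Matrix.diagonal fun i => ρ i i)
            - (Matrix.diagonal fun i => ρ i i) * cfc Real.log ρ).trace) ∧
    (ρ * cfc Real.log ρ
        - ρ * cfc Real.log (Matrix.diagonal fun i => ρ i i)).trace ≤
      ((ρ - Matrix.diagonal fun i => ρ i i) * cfc Real.log ρ).trace := by
  choose p l hp hpρ hl hle using exists_log_diag_le hρ
  have hdiag : (Matrix.diagonal fun i => ρ i i) = Matrix.diagonal fun i => (p i : ℂ) := by
    simp only [hpρ]
  have hlog : cfc Real.log (Matrix.diagonal fun i => ρ i i) =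
      Matrix.diagonal fun i => (Real.log (p i) : ℂ) := by
    rw [hdiag, cfc_diagonal_ofReal]
  have htr : (ρ * cfc Real.log (Matrix.diagonal fun i => ρ i i)).trace =
      ((Matrix.diagonal fun i => ρ i i) *
        cfc Real.log (Matrix.diagonal fun i => ρ i i)).trace := by
    rw [hlog]
    simp [Matrix.trace, Matrix.mul_diagonal]
  have hid : ((ρ - Matrix.diagonal fun i => ρ i i) * cfc Real.log ρ).trace =
        ((ρ * cfc Real.log ρ
            - ρ * cfc Real.log (Matrix.diagonal fun i => ρ i i)).trace)
        + (((Matrix.diagonal fun i => ρ i i)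
              * cfc Real.log (Matrix.diagonal fun i => ρ i i)
            - (Matrix.diagonal fun i => ρ i i) * cfc Real.log ρ).trace) := by
    rw [Matrix.sub_mul, Matrix.trace_sub, Matrix.trace_sub, Matrix.trace_sub, htr]
    ring
  refine ⟨hid, ?_⟩
  rw [hid]
  refine le_add_of_nonneg_right ?_
  rw [hlog, Matrix.trace]
  refine Finset.sum_nonneg fun i _ => ?_
  rw [Matrix.diag_apply, Matrix.sub_apply, Matrix.diagonal_mul, Matrix.diagonal_mul,
    Matrix.diagonal_apply_eq, hpρ, hl, ← mul_sub]
  exact_mod_cast mul_nonneg (hp i).le (sub_nonneg.2 (hle i))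
end

section
/- Let ρ and σ be positive definite d×d complex matrices, Y ∈ M_d(ℂ), λ > 0, t ≥ 0, and set ρ_t := e^{−λt}·ρ + (1−e^{−λt})·σ. Then ∫₀¹ Tr(Y* ρ^s Y ρ^{1−s}) ds ≤ e^{λt} · ∫₀¹ Tr(Y* ρ_t^s Y ρ_t^{1−s}) ds, where real powers of positive definite matrices are defined by functional calculus (the traces appearing are real and nonnegative). -/
open scoped Matrix ComplexOrder

/-!
Lieb's concavity theorem is not needed here: operator monotonicity of real powers suffices.
Put `τ = e^{-λt} ρ + (1 - e^{-λt}) σ` and `c = e^{-λt}`. As `σ ≥ 0` and `c ≤ 1`,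
we have `ρ ≤ c⁻¹ τ` in the Loewner order. By the Löwner–Heinz theorem (`CFC.rpow_le_rpow`),
`ρ^p ≤ (c⁻¹ τ)^p = c^{-p} τ^p` for each `p ∈ [0, 1]` (`cfc_rpow_le_smul`). The form
`(P, Q) ↦ Tr(Y* P Y Q)` is monotone in each positive semidefinite argument (`trace_re_mono`), so
`Tr(Y* ρ^s Y ρ^{1-s}) ≤ c^{-s} c^{-(1-s)} Tr(Y* τ^s Y τ^{1-s}) = e^{λt} Tr(Y* τ^s Y τ^{1-s})`
for every `s ∈ [0, 1]`. Integrating this pointwise bound gives the claim; integrability holds because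
the matrix powers are continuous in the exponent (`continuous_cfc_rpow`).
-/

namespace DepolarizingGradient

open Matrix
open scoped MatrixOrder Matrix.Norms.L2Operator

variable {n : Type*} [Fintype n] [DecidableEq n]

lemma posSemidef_cfc_rpow {A : Matrix n n ℂ} (hA : A.PosDef) (s : ℝ) :
    (cfc (fun x : ℝ => x ^ s) A).PosSemidef := by
  rw [← CFC.rpow_eq_cfc_real hA.posSemidef.nonneg]
  exact Matrix.nonneg_iff_posSemidef.mp CFC.rpow_nonneg

lemma cfc_rpow_smul {A : Matrix n n ℂ} (hA : A.PosDef) {c : ℝ} (hc : 0 < c) (s : ℝ) :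
    cfc (fun x : ℝ => x ^ s) (c • A) = c ^ s • cfc (fun x : ℝ => x ^ s) A := by
  have hfin : (spectrum ℝ A).Finite := Matrix.finite_real_spectrum
  have hsa : IsSelfAdjoint A := hA.isHermitian
  rw [← cfc_comp_const_mul c (fun x : ℝ => x ^ s) A ((hfin.image _).continuousOn _) hsa,
    ← cfc_const_mul _ _ A (hfin.continuousOn _)]
  refine cfc_congr fun x hx => ?_
  have hx0 : 0 ≤ x := spectrum_nonneg_of_nonneg hA.posSemidef.nonneg hx
  exact Real.mul_rpow hc.le hx0

/-- Löwner–Heinz combined with homogeneity of the power function. -/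
lemma cfc_rpow_le_smul {A B : Matrix n n ℂ} (hA : A.PosDef) (hB : B.PosDef) {c : ℝ} (hc : 0 < c)
    (h : A ≤ c • B) {s : ℝ} (hs : s ∈ Set.Icc (0 : ℝ) 1) :
    cfc (fun x : ℝ => x ^ s) A ≤ c ^ s • cfc (fun x : ℝ => x ^ s) B := by
  rw [← cfc_rpow_smul hB hc, ← CFC.rpow_eq_cfc_real hA.posSemidef.nonneg,
    ← CFC.rpow_eq_cfc_real (hA.posSemidef.nonneg.trans h)]
  exact CFC.rpow_le_rpow hs h

lemma trace_re_nonneg {P Q : Matrix n n ℂ} (Y : Matrix n n ℂ) (hP : P.PosSemidef)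
    (hQ : Q.PosSemidef) : 0 ≤ ((Yᴴ * P * Y * Q).trace).re := by
  obtain ⟨B, rfl⟩ := CStarAlgebra.nonneg_iff_eq_star_mul_self.mp hQ.nonneg
  have h := ((hP.conjTranspose_mul_mul_same Y).mul_mul_conjTranspose_same B).trace_nonneg
  rw [← Matrix.mul_assoc, Matrix.trace_mul_comm, ← Matrix.mul_assoc]
  exact (Complex.le_def.mp h).1

lemma trace_re_mono {P₁ P₂ Q₁ Q₂ : Matrix n n ℂ} (Y : Matrix n n ℂ) (hP₁ : P₁.PosSemidef)
    (hQ₁ : Q₁.PosSemidef) (hP : P₁ ≤ P₂) (hQ : Q₁ ≤ Q₂) :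
    ((Yᴴ * P₁ * Y * Q₁).trace).re ≤ ((Yᴴ * P₂ * Y * Q₂).trace).re := by
  have hQ₂ : Q₂.PosSemidef := (hQ₁.nonneg.trans hQ).posSemidef
  have h₁ := trace_re_nonneg Y (Matrix.le_iff.mp hP) hQ₂
  have h₂ := trace_re_nonneg Y hP₁ (Matrix.le_iff.mp hQ)
  simp only [mul_sub, sub_mul, Matrix.trace_sub, Complex.sub_re] at h₁ h₂
  linarith

/-- Matrix powers depend continuously on the exponent: in an eigenbasis of `A` this is the
continuity of `s ↦ x ^ s` for each eigenvalue `x > 0`. -/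
lemma continuous_cfc_rpow {A : Matrix n n ℂ} (hA : A.PosDef) :
    Continuous fun s : ℝ => cfc (fun x : ℝ => x ^ s) A := by
  simp only [hA.isHermitian.cfc_eq, Matrix.IsHermitian.cfc, Unitary.conjStarAlgAut_apply]
  refine (continuous_const.mul (Continuous.matrix_diagonal ?_)).mul continuous_const
  refine continuous_pi fun i => ?_
  exact Complex.continuous_ofReal.comp
    (continuous_const.rpow continuous_id fun _ => Or.inl (hA.eigenvalues_pos i).ne')

lemma continuous_trace_re {A : Matrix n n ℂ} (hA : A.PosDef) (Y : Matrix n n ℂ) :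
    Continuous fun s : ℝ =>
      ((Yᴴ * cfc (fun x : ℝ => x ^ s) A * Y * cfc (fun x : ℝ => x ^ (1 - s)) A).trace).re := by
  have h₁ := continuous_cfc_rpow hA
  have h₂ : Continuous fun s : ℝ => cfc (fun x : ℝ => x ^ (1 - s)) A :=
    h₁.comp (continuous_const.sub continuous_id)
  exact Complex.continuous_re.comp
    (((continuous_const.mul h₁).mul continuous_const).mul h₂).matrix_trace

/-- The pointwise inequality: the factors `c ^ s` and `c ^ (1 - s)` multiply to `c`. -/
lemma trace_re_le {A B : Matrix n n ℂ} (hA : A.PosDef) (hB : B.PosDef) {c : ℝ} (hc : 0 < c)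
    (h : A ≤ c • B) (Y : Matrix n n ℂ) {s : ℝ} (hs : s ∈ Set.Icc (0 : ℝ) 1) :
    ((Yᴴ * cfc (fun x : ℝ => x ^ s) A * Y * cfc (fun x : ℝ => x ^ (1 - s)) A).trace).re ≤
      c * ((Yᴴ * cfc (fun x : ℝ => x ^ s) B * Y * cfc (fun x : ℝ => x ^ (1 - s)) B).trace).re := by
  have hs' : 1 - s ∈ Set.Icc (0 : ℝ) 1 := ⟨by linarith [hs.2], by linarith [hs.1]⟩
  refine (trace_re_mono Y (posSemidef_cfc_rpow hA s) (posSemidef_cfc_rpow hA (1 - s))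
    (cfc_rpow_le_smul hA hB hc h hs) (cfc_rpow_le_smul hA hB hc h hs')).trans_eq ?_
  have hcc : c ^ (1 - s) * c ^ s = c := by
    rw [← Real.rpow_add hc, sub_add_cancel, Real.rpow_one]
  simp only [Matrix.mul_smul, Matrix.smul_mul, smul_smul, hcc, Matrix.trace_smul, Complex.real_smul,
    Complex.re_ofReal_mul]

end DepolarizingGradient

open DepolarizingGradient

/-- The matrix content of Theorem 3.17: for positive definite `ρ`, `σ`, any matrix `Y`,
`λ > 0`, `t ≥ 0` and `ρ_t = e^{-λt}ρ + (1-e^{-λt})σ`, the weighted L₂-norms satisfy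
`‖Y‖²_ρ ≤ e^{λt}·‖Y‖²_{ρ_t}`, i.e.
`∫₀¹ Tr(Y* ρ^s Y ρ^{1-s}) ds ≤ e^{λt} ∫₀¹ Tr(Y* ρ_t^s Y ρ_t^{1-s}) ds`,
real powers being taken by functional calculus (the traces appearing are real, so we
state the inequality for their real parts). -/
theorem depolarizing_gradient_estimate
    (d : ℕ) (ρ σ Y : Matrix (Fin d) (Fin d) ℂ)
    (hρ : ρ.PosDef) (hσ : σ.PosDef) (lam t : ℝ) (hlam : 0 < lam) (ht : 0 ≤ t) :
    ∫ s in (0:ℝ)..1,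
        ((Yᴴ * cfc (fun x : ℝ => x ^ s) ρ * Y * cfc (fun x : ℝ => x ^ (1 - s)) ρ).trace).re ≤
      Real.exp (lam * t) *
        ∫ s in (0:ℝ)..1,
          ((Yᴴ * cfc (fun x : ℝ => x ^ s)
                (Real.exp (-lam * t) • ρ + (1 - Real.exp (-lam * t)) • σ)
              * Y * cfc (fun x : ℝ => x ^ (1 - s))
                (Real.exp (-lam * t) • ρ + (1 - Real.exp (-lam * t)) • σ)).trace).re := by
  have hc : 0 < Real.exp (-lam * t) := Real.exp_pos _
  have hc1 : Real.exp (-lam * t) ≤ 1 := Real.exp_le_one_iff.mpr (by nlinarith)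
  have hinv : Real.exp (lam * t) * Real.exp (-lam * t) = 1 := by
    rw [← Real.exp_add]; simp
  set c := Real.exp (-lam * t)
  have hσ' : ((1 - c) • σ).PosSemidef := hσ.posSemidef.smul (sub_nonneg.mpr hc1)
  have hτ : (c • ρ + (1 - c) • σ).PosDef := (hρ.smul hc).add_posSemidef hσ'
  have hle : (Real.exp (lam * t) • (c • ρ + (1 - c) • σ) - ρ).PosSemidef := by
    rw [smul_add, smul_smul, hinv, one_smul, add_sub_cancel_left]
    exact hσ'.smul (Real.exp_pos _).le
  rw [← intervalIntegral.integral_const_mul]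
  exact intervalIntegral.integral_mono_on zero_le_one
    ((continuous_trace_re hρ Y).intervalIntegrable 0 1)
    (((continuous_trace_re hτ Y).const_mul _).intervalIntegrable 0 1)
    fun s hs => trace_re_le hρ hτ (Real.exp_pos _) hle Y hs
end
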